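/- Let U ⊆ ℂ be a nonempty open connected set and let x, y : ℂ → ℂ be analytic on a neighbourhood of U (AnalyticOnNhd), such that for every t ∈ U, (deriv x t, deriv y t) ≠ (0,0). Then the Wronskian W(t) := deriv x t · deriv (deriv y) t − deriv (deriv x) t · deriv y t vanishes for all t ∈ U if and only if there exist a, b, c ∈ ℂ with (a,b) ≠ (0,0) such that a·x(t) + b·y(t) = c for all t ∈ U (i.e. the regular curve t ↦ (x(t), y(t)) is contained in a complex line). -/

import Mathlib

/-!
The expression `x' y'' - x'' y'` is the Wronskian of the pair `(x', y')`. Near a point where `f ≠ 0`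
the quotient `g / f` has derivative `W(f, g) / f²`, so a vanishing Wronskian forces `g = k f` there,
and for analytic functions the identity theorem spreads this relation over the whole domain. Applied
to `(x', y')` this gives a relation `a x' + b y' = 0`, which integrates to `a x + b y = c`.
-/

open Filter Topology

section Wronskian

variable {𝕜 : Type*} [NontriviallyNormedField 𝕜] {f g : 𝕜 → 𝕜} {a b t : 𝕜}

/-- The Wronskian `f g' - f' g` of two functions of one variable, whose vanishing detects linear
dependence. It is expressed through `deriv`, hence meaningful only where `f` and `g` are
differentiable. -/
noncomputable def wronskian (f g : 𝕜 → 𝕜) (t : 𝕜) : 𝕜 :=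
  f t * deriv g t - deriv f t * g t

theorem hasDerivAt_div_wronskian (hf : DifferentiableAt 𝕜 f t) (hg : DifferentiableAt 𝕜 g t)
    (hft : f t ≠ 0) : HasDerivAt (fun s => g s / f s) (wronskian f g t / f t ^ 2) t := by
  refine (hg.hasDerivAt.fun_div hf.hasDerivAt hft).congr_deriv ?_
  rw [wronskian]
  ring

theorem deriv_const_mul_add_const_mul (hf : DifferentiableAt 𝕜 f t)
    (hg : DifferentiableAt 𝕜 g t) :
    deriv (fun s => a * f s + b * g s) t = a * deriv f t + b * deriv g t :=
  ((hf.hasDerivAt.const_mul a).fun_add (hg.hasDerivAt.const_mul b)).deriv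

theorem wronskian_eq_zero_of_eventually_linear_relation (hf : DifferentiableAt 𝕜 f t)
    (hg : DifferentiableAt 𝕜 g t) (hab : (a, b) ≠ (0, 0))
    (hrel : ∀ᶠ s in 𝓝 t, a * f s + b * g s = 0) : wronskian f g t = 0 := by
  have hval : a * f t + b * g t = 0 := hrel.self_of_nhds
  have hderiv : a * deriv f t + b * deriv g t = 0 := by
    rw [← deriv_const_mul_add_const_mul hf hg, EventuallyEq.deriv_eq hrel, deriv_const]
  have ha : a * wronskian f g t = 0 := by
    rw [wronskian]
    linear_combination deriv g t * hval - g t * hderiv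
  have hb : b * wronskian f g t = 0 := by
    rw [wronskian]
    linear_combination f t * hderiv - deriv f t * hval
  by_contra hW
  exact hab (Prod.ext ((mul_eq_zero_iff_right hW).1 ha) ((mul_eq_zero_iff_right hW).1 hb))

end Wronskian

section LinearDependence

variable {𝕜 : Type*} [RCLike 𝕜] {U : Set 𝕜} {f g : 𝕜 → 𝕜}

theorem forall_deriv_eq_zero_iff_exists_eq_const {E : Type*} [NormedAddCommGroup E]
    [NormedSpace 𝕜 E] {F : 𝕜 → E} (hUo : IsOpen U) (hUc : IsPreconnected U)
    (hF : DifferentiableOn 𝕜 F U) :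
    (∀ t ∈ U, deriv F t = 0) ↔ ∃ c, ∀ t ∈ U, F t = c := by
  refine ⟨hUo.exists_is_const_of_deriv_eq_zero hUc hF, ?_⟩
  rintro ⟨c, hc⟩ t ht
  have hFc : F =ᶠ[𝓝 t] fun _ => c := eventually_of_mem (hUo.mem_nhds ht) hc
  rw [hFc.deriv_eq, deriv_const]

theorem exists_eq_const_mul_of_wronskian_eq_zero (hUo : IsOpen U) (hUc : IsPreconnected U)
    (hf : DifferentiableOn 𝕜 f U) (hg : DifferentiableOn 𝕜 g U) (hne : ∀ t ∈ U, f t ≠ 0)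
    (hW : ∀ t ∈ U, wronskian f g t = 0) : ∃ k, ∀ t ∈ U, g t = k * f t := by
  have hquot : ∀ t ∈ U, deriv (fun s => g s / f s) t = 0 := fun t ht => by
    rw [(hasDerivAt_div_wronskian (hf.differentiableAt (hUo.mem_nhds ht))
      (hg.differentiableAt (hUo.mem_nhds ht)) (hne t ht)).deriv, hW t ht, zero_div]
  obtain ⟨k, hk⟩ := (forall_deriv_eq_zero_iff_exists_eq_const hUo hUc (hg.fun_div hf hne)).1 hquot
  exact ⟨k, fun t ht => (div_eq_iff (hne t ht)).1 (hk t ht)⟩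

theorem exists_eq_const_mul_of_analyticOnNhd_of_wronskian_eq_zero (hUo : IsOpen U)
    (hUc : IsPreconnected U) (hf : AnalyticOnNhd 𝕜 f U) (hg : AnalyticOnNhd 𝕜 g U)
    (hne : ∃ t ∈ U, f t ≠ 0) (hW : ∀ t ∈ U, wronskian f g t = 0) :
    ∃ k, ∀ t ∈ U, g t = k * f t := by
  obtain ⟨t₀, ht₀, hft₀⟩ := hne
  have hnear : ∀ᶠ t in 𝓝 t₀, t ∈ U ∧ f t ≠ 0 :=
    (hUo.eventually_mem ht₀).and ((hf t₀ ht₀).continuousAt.eventually_ne hft₀)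
  obtain ⟨r, hr, hball⟩ := Metric.eventually_nhds_iff_ball.1 hnear
  have hsub : Metric.ball t₀ r ⊆ U := fun t ht => (hball t ht).1
  obtain ⟨k, hk⟩ := exists_eq_const_mul_of_wronskian_eq_zero Metric.isOpen_ball
    Metric.isPreconnected_ball (hf.differentiableOn.mono hsub)
    (hg.differentiableOn.mono hsub) (fun t ht => (hball t ht).2) fun t ht => hW t (hsub ht)
  exact ⟨k, hg.eqOn_of_preconnected_of_eventuallyEq (analyticOnNhd_const.mul hf) hUc ht₀
    (eventually_of_mem (Metric.ball_mem_nhds t₀ hr) hk)⟩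

theorem wronskian_eq_zero_iff_exists_linear_relation (hUo : IsOpen U) (hUc : IsPreconnected U)
    (hf : AnalyticOnNhd 𝕜 f U) (hg : AnalyticOnNhd 𝕜 g U) :
    (∀ t ∈ U, wronskian f g t = 0) ↔
      ∃ a b : 𝕜, (a, b) ≠ (0, 0) ∧ ∀ t ∈ U, a * f t + b * g t = 0 := by
  constructor
  · intro hW
    by_cases hf0 : ∀ t ∈ U, f t = 0
    · exact ⟨1, 0, by simp, fun t ht => by simp [hf0 t ht]⟩
    · push Not at hf0
      obtain ⟨k, hk⟩ :=
        exists_eq_const_mul_of_analyticOnNhd_of_wronskian_eq_zero hUo hUc hf hg hf0 hW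
      exact ⟨-k, 1, by simp, fun t ht => by linear_combination hk t ht⟩
  · rintro ⟨a, b, hab, hrel⟩ t ht
    exact wronskian_eq_zero_of_eventually_linear_relation (hf t ht).differentiableAt
      (hg t ht).differentiableAt hab (eventually_of_mem (hUo.mem_nhds ht) hrel)

theorem linear_relation_deriv_iff_exists_eq_const (hUo : IsOpen U) (hUc : IsPreconnected U)
    (hf : DifferentiableOn 𝕜 f U) (hg : DifferentiableOn 𝕜 g U) (a b : 𝕜) :
    (∀ t ∈ U, a * deriv f t + b * deriv g t = 0) ↔ ∃ c, ∀ t ∈ U, a * f t + b * g t = c := by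
  rw [← forall_deriv_eq_zero_iff_exists_eq_const hUo hUc
    ((hf.const_mul a).fun_add (hg.const_mul b))]
  refine forall₂_congr fun t ht => ?_
  rw [deriv_const_mul_add_const_mul (hf.differentiableAt (hUo.mem_nhds ht))
    (hg.differentiableAt (hUo.mem_nhds ht))]

theorem regular_curve_line_iff_wronskian_zero_general {x y : 𝕜 → 𝕜} (hUo : IsOpen U)
    (hUc : IsPreconnected U) (hx : AnalyticOnNhd 𝕜 x U) (hy : AnalyticOnNhd 𝕜 y U) :
    (∀ t ∈ U, deriv x t * deriv (deriv y) t - deriv (deriv x) t * deriv y t = 0) ↔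
      ∃ a b c : 𝕜, (a, b) ≠ (0, 0) ∧ ∀ t ∈ U, a * x t + b * y t = c := by
  refine (wronskian_eq_zero_iff_exists_linear_relation hUo hUc hx.deriv hy.deriv).trans ?_
  simp only [linear_relation_deriv_iff_exists_eq_const hUo hUc hx.differentiableOn
    hy.differentiableOn, exists_and_left]

end LinearDependence

/-- **Proposition 2.3(2).** A regular holomorphic plane curve `t ↦ (x t, y t)` on a
nonempty open connected set `U ⊆ ℂ` has identically vanishing Wronskian
`x'·y'' − x''·y'` if and only if it is contained in a complex line. -/
theorem regular_curve_line_iff_wronskian_zero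
    (U : Set ℂ) (hUne : U.Nonempty) (hUo : IsOpen U) (hUc : IsPreconnected U)
    (x y : ℂ → ℂ) (hx : AnalyticOnNhd ℂ x U) (hy : AnalyticOnNhd ℂ y U)
    (hreg : ∀ t ∈ U, (deriv x t, deriv y t) ≠ (0, 0)) :
    (∀ t ∈ U, deriv x t * deriv (deriv y) t - deriv (deriv x) t * deriv y t = 0) ↔
      ∃ a b c : ℂ, (a, b) ≠ (0, 0) ∧ ∀ t ∈ U, a * x t + b * y t = c :=
  regular_curve_line_iff_wronskian_zero_general hUo hUc hx hy
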